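/- Let N ≥ 2, s ∈ (0,1), let B ⊂ ℝ^N be an open ball centered at the origin, and let u be a continuous first nontrivial eigenfunction on B (i.e. a continuous eigenfunction associated to μ₁^{(s)}(B)). Then for every e ∈ 𝕊^{N−1}, either P_e u = u in ℝ^N or P_e u = u∘σ_e in ℝ^N; consequently, u is foliated Schwarz symmetric with respect to some p ∈ 𝕊^{N−1}. -/

import Mathlib

open MeasureTheory Filter Topology Bornology Set
open scoped ENNReal NNReal

noncomputable section

namespace FracNeumann

abbrev Euc (N : ℕ) : Type := EuclideanSpace ℝ (Fin N)

/-- The kernel weight `|x - y| ^ (N + 2s)`. -/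
def kern (N : ℕ) (s : ℝ) (x y : Euc N) : ℝ := ‖x - y‖ ^ ((N : ℝ) + 2 * s)

/-- The region `ℝ^{2N} \ (Ω^c × Ω^c)`, where `Ω^c := ℝ^N \ closure Ω`. -/
def reg (N : ℕ) (Ω : Set (Euc N)) : Set (Euc N × Euc N) :=
  {q | q.1 ∈ closure Ω ∨ q.2 ∈ closure Ω}

/-- The squared seminorm `[u]_{H^s_{Ω,0}}²`, as an extended real number. -/
def semiSq (N : ℕ) (s : ℝ) (Ω : Set (Euc N)) (u : Euc N → ℝ) : ℝ≥0∞ :=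
  ∫⁻ q in reg N Ω, ENNReal.ofReal ((u q.1 - u q.2) ^ 2 / kern N s q.1 q.2)

/-- `∫_Ω u²`, as an extended real number. -/
def l2sq (N : ℕ) (Ω : Set (Euc N)) (u : Euc N → ℝ) : ℝ≥0∞ :=
  ∫⁻ x in Ω, ENNReal.ofReal ((u x) ^ 2)

/-- Membership in `H^s_{Ω,0}`. -/
def memHs (N : ℕ) (s : ℝ) (Ω : Set (Euc N)) (u : Euc N → ℝ) : Prop :=
  Measurable u ∧ l2sq N Ω u < ⊤ ∧ semiSq N s Ω u < ⊤

/-- The squared Gagliardo seminorm `[u]_{H^s(Ω)}²`. -/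
def semiSqOn (N : ℕ) (s : ℝ) (Ω : Set (Euc N)) (u : Euc N → ℝ) : ℝ≥0∞ :=
  ∫⁻ q in Ω ×ˢ Ω, ENNReal.ofReal ((u q.1 - u q.2) ^ 2 / kern N s q.1 q.2)

/-- Membership in `H^s(Ω)` (for functions defined on all of `ℝ^N`). -/
def memHsOn (N : ℕ) (s : ℝ) (Ω : Set (Euc N)) (u : Euc N → ℝ) : Prop :=
  Measurable u ∧ l2sq N Ω u < ⊤ ∧ semiSqOn N s Ω u < ⊤

/-- The normalizing constant `c_{N,s}` of the fractional Laplacian. -/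
def cNs (N : ℕ) (s : ℝ) : ℝ :=
  (4 : ℝ) ^ s * s * Real.Gamma ((N : ℝ) / 2 + s) /
    (Real.pi ^ ((N : ℝ) / 2) * Real.Gamma (1 - s))

/-- The nonlocal Neumann derivative `𝒩_s u`. -/
def Nneu (N : ℕ) (s : ℝ) (Ω : Set (Euc N)) (u : Euc N → ℝ) (x : Euc N) : ℝ :=
  cNs N s * ∫ y in Ω, (u x - u y) / kern N s x y

/-- Membership in `H̃^s_{Ω,0}`: members of `H^s_{Ω,0}` with `𝒩_s u = 0` a.e. in `Ω^c`. -/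
def memHsTilde (N : ℕ) (s : ℝ) (Ω : Set (Euc N)) (u : Euc N → ℝ) : Prop :=
  memHs N s Ω u ∧ ∀ᵐ x ∂(volume.restrict (closure Ω)ᶜ), Nneu N s Ω u x = 0

/-- The first nontrivial Neumann eigenvalue `μ₁^{(s)}(Ω)`. -/
def mu1 (N : ℕ) (s : ℝ) (Ω : Set (Euc N)) : ℝ :=
  sInf {t : ℝ | ∃ u : Euc N → ℝ, memHs N s Ω u ∧ (∫ x in Ω, (u x) ^ 2) = 1 ∧
    (∫ x in Ω, u x) = 0 ∧ t = cNs N s / 2 * (semiSq N s Ω u).toReal}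

/-- The bilinear form (without the constant). -/
def bform (N : ℕ) (s : ℝ) (Ω : Set (Euc N)) (u v : Euc N → ℝ) : ℝ :=
  ∫ q in reg N Ω, (u q.1 - u q.2) * (v q.1 - v q.2) / kern N s q.1 q.2

/-- First nontrivial eigenfunction: weak solution associated to `μ₁^{(s)}(Ω)`. -/
def IsFirstEigen (N : ℕ) (s : ℝ) (Ω : Set (Euc N)) (u : Euc N → ℝ) : Prop :=
  memHs N s Ω u ∧ ¬ (u =ᵐ[volume.restrict Ω] 0) ∧ (∫ x in Ω, u x) = 0 ∧
    ∀ v : Euc N → ℝ, memHs N s Ω v →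
      cNs N s / 2 * bform N s Ω u v = mu1 N s Ω * ∫ x in Ω, u x * v x

/-- Reflection `σ_e(x) = x - 2(x·e)e` across the hyperplane `{x·e = 0}`. -/
def reflect (N : ℕ) (e x : Euc N) : Euc N := x - (2 * (inner ℝ x e : ℝ)) • e

/-- The polarization `P_e u` with respect to the hyperplane `{x·e = 0}`. -/
def polarize (N : ℕ) (e : Euc N) (u : Euc N → ℝ) (x : Euc N) : ℝ :=
  if 0 ≤ (inner ℝ x e : ℝ) then min (u x) (u (reflect N e x))
  else max (u x) (u (reflect N e x))

/-- Foliated Schwarz symmetry with respect to `p`. -/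
def FoliatedSchwarz (N : ℕ) (p : Euc N) (u : Euc N → ℝ) : Prop :=
  ∃ uh : ℝ → ℝ → ℝ, (∀ r : ℝ, AntitoneOn (uh r) (Icc 0 Real.pi)) ∧
    ∀ x : Euc N, x ≠ 0 → u x = uh ‖x‖ (Real.arccos ((inner ℝ x p : ℝ) / ‖x‖))

/-- Radial symmetry (pointwise). -/
def Radial (N : ℕ) (u : Euc N → ℝ) : Prop := ∃ f : ℝ → ℝ, ∀ x, u x = f ‖x‖

/-- Radial symmetry (a.e.). -/
def RadialAE (N : ℕ) (u : Euc N → ℝ) : Prop :=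
  ∃ f : ℝ → ℝ, ∀ᵐ x : Euc N ∂volume, u x = f ‖x‖

/-- The set `{x ∈ Ω : u x ≠ 0}` has exactly two connected components. -/
def TwoNodal (N : ℕ) (Ω : Set (Euc N)) (u : Euc N → ℝ) : Prop :=
  Nat.card (ConnectedComponents {x : Euc N // x ∈ Ω ∧ u x ≠ 0}) = 2

/-- Bounded Lipschitz domain: open, bounded, connected, and near every boundary point the set
is the region above the graph of a Lipschitz function in some direction `e`. -/
def IsLipschitzDomain (N : ℕ) (Ω : Set (Euc N)) : Prop :=
  IsOpen Ω ∧ IsBounded Ω ∧ IsConnected Ω ∧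
    ∀ x ∈ frontier Ω, ∃ e : Euc N, ‖e‖ = 1 ∧ ∃ r : ℝ, 0 < r ∧
      ∃ (L : NNReal) (f : Euc N → ℝ), LipschitzWith L f ∧
        ∀ y ∈ Metric.ball x r,
          (y ∈ Ω ↔ f (y - ((inner ℝ y e : ℝ)) • e) < (inner ℝ y e : ℝ))

/-- `g` is a weak gradient of `u` in `Ω`, square-integrable on `Ω`. -/
def IsWeakGradient (N : ℕ) (Ω : Set (Euc N)) (u : Euc N → ℝ) (g : Euc N → Euc N) : Prop :=
  Measurable g ∧ (∫⁻ x in Ω, ENNReal.ofReal (‖g x‖ ^ 2)) < ⊤ ∧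
    ∀ φ : Euc N → ℝ, ContDiff ℝ (⊤ : ℕ∞) φ → HasCompactSupport φ → tsupport φ ⊆ Ω →
      ∀ i : Fin N, (∫ x in Ω, u x * fderiv ℝ φ x (EuclideanSpace.single i 1)) =
        - ∫ x in Ω, g x i * φ x

/-- Membership in `H¹(Ω)`. -/
def memH1 (N : ℕ) (Ω : Set (Euc N)) (u : Euc N → ℝ) : Prop :=
  Measurable u ∧ l2sq N Ω u < ⊤ ∧ ∃ g, IsWeakGradient N Ω u g

/-- `∫_Ω |∇u|²`, as an extended real number. -/
def gradSq (N : ℕ) (Ω : Set (Euc N)) (u : Euc N → ℝ) : ℝ≥0∞ :=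
  ⨅ (g : Euc N → Euc N) (_ : IsWeakGradient N Ω u g), ∫⁻ x in Ω, ENNReal.ofReal (‖g x‖ ^ 2)

/-- Rayleigh quotient for the fractional Neumann problem. -/
def rayleighS (N : ℕ) (s : ℝ) (Ω : Set (Euc N)) (u : Euc N → ℝ) : ℝ≥0∞ :=
  ENNReal.ofReal (cNs N s / 2) * semiSq N s Ω u / l2sq N Ω u

/-- Rayleigh quotient for the local Neumann problem. -/
def rayleigh1 (N : ℕ) (Ω : Set (Euc N)) (u : Euc N → ℝ) : ℝ≥0∞ :=
  gradSq N Ω u / l2sq N Ω u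

/-- The min-max value `μ_n^{(s)}(Ω)` over `n`-dimensional subspaces of `H^s_{Ω,0} ∩ L²₀(Ω)`. -/
def muNs (N : ℕ) (s : ℝ) (Ω : Set (Euc N)) (n : ℕ) : ℝ≥0∞ :=
  ⨅ (A : Submodule ℝ (Euc N → ℝ)) (_ : Module.finrank ℝ A = n ∧
      (∀ u ∈ A, memHs N s Ω u ∧ (∫ x in Ω, u x) = 0) ∧
      (∀ u ∈ A, u =ᵐ[(volume : Measure (Euc N))] 0 → u = 0)),
    ⨆ (u : Euc N → ℝ) (_ : u ∈ A ∧ u ≠ 0), rayleighS N s Ω u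

/-- The min-max value over `n`-dimensional subspaces of `H̃^s_{Ω,0} ∩ L²₀(Ω)`. -/
def muNsTilde (N : ℕ) (s : ℝ) (Ω : Set (Euc N)) (n : ℕ) : ℝ≥0∞ :=
  ⨅ (A : Submodule ℝ (Euc N → ℝ)) (_ : Module.finrank ℝ A = n ∧
      (∀ u ∈ A, memHsTilde N s Ω u ∧ (∫ x in Ω, u x) = 0) ∧
      (∀ u ∈ A, u =ᵐ[(volume : Measure (Euc N))] 0 → u = 0)),
    ⨆ (u : Euc N → ℝ) (_ : u ∈ A ∧ u ≠ 0), rayleighS N s Ω u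

/-- The min-max value `μ_n^{(1)}(Ω)` over `n`-dimensional subspaces of `H¹(Ω) ∩ L²₀(Ω)`. -/
def muN1 (N : ℕ) (Ω : Set (Euc N)) (n : ℕ) : ℝ≥0∞ :=
  ⨅ (A : Submodule ℝ (Euc N → ℝ)) (_ : Module.finrank ℝ A = n ∧
      (∀ u ∈ A, memH1 N Ω u ∧ (∫ x in Ω, u x) = 0) ∧
      (∀ u ∈ A, u =ᵐ[volume.restrict Ω] 0 → u = 0)),
    ⨆ (u : Euc N → ℝ) (_ : u ∈ A ∧ u ≠ 0), rayleigh1 N Ω u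

/-- `μ_n^{(s)}(Ω)` including `μ₀^{(s)}(Ω) := 0`. -/
def muNsFull (N : ℕ) (s : ℝ) (Ω : Set (Euc N)) (n : ℕ) : ℝ≥0∞ :=
  if n = 0 then 0 else muNs N s Ω n

/-- `μ_n^{(1)}(Ω)` including `μ₀^{(1)}(Ω) := 0`. -/
def muN1Full (N : ℕ) (Ω : Set (Euc N)) (n : ℕ) : ℝ≥0∞ :=
  if n = 0 then 0 else muN1 N Ω n

/-- The squared `H^s_{Ω,0}`-seminorm of the `s`-minimal extension of `u`:
the minimal value of `[v]²` over `v ∈ H^s_{Ω,0}` with `v = u` a.e. in `Ω`. -/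
def minExtSemiSq (N : ℕ) (s : ℝ) (Ω : Set (Euc N)) (u : Euc N → ℝ) : ℝ≥0∞ :=
  ⨅ (v : Euc N → ℝ) (_ : memHs N s Ω v ∧ v =ᵐ[volume.restrict Ω] u), semiSq N s Ω v

/-- `ω_{N-1}`: volume of the unit ball of `ℝ^{N-1}`. -/
def omegaPrev (N : ℕ) : ℝ := (volume (Metric.ball (0 : Euc (N - 1)) 1)).toReal

/-- Membership in `L²₀(Ω)`. -/
def memL20 (N : ℕ) (Ω : Set (Euc N)) (u : Euc N → ℝ) : Prop :=
  Measurable u ∧ l2sq N Ω u < ⊤ ∧ (∫ x in Ω, u x) = 0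

/-- The functional `F_s` (value `+∞` outside `H^s(Ω)`). -/
def Fs (N : ℕ) (s : ℝ) (Ω : Set (Euc N)) (u : Euc N → ℝ) : ℝ≥0∞ :=
  ENNReal.ofReal (1 - s) * minExtSemiSq N s Ω u

/-- The functional `F₁` (value `+∞` outside `H¹(Ω)`). -/
def F1 (N : ℕ) (Ω : Set (Euc N)) (u : Euc N → ℝ) : ℝ≥0∞ :=
  ENNReal.ofReal (omegaPrev N / (2 * N)) * gradSq N Ω u

end FracNeumann
namespace FracNeumann

section Refl
variable {N : ℕ} {e : Euc N}

lemma refl_eq (he : ‖e‖ = 1) (x : Euc N) : reflect N e x = (ℝ ∙ e)ᗮ.reflection x := by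
  rw [Submodule.reflection_orthogonal_apply, Submodule.reflection_singleton_apply]
  simp only [he, reflect]
  rw [real_inner_comm]
  simp
  module

lemma refl_fun_eq (he : ‖e‖ = 1) : reflect N e = (ℝ ∙ e)ᗮ.reflection := funext (refl_eq he)

lemma refl_invol (he : ‖e‖ = 1) (x : Euc N) : reflect N e (reflect N e x) = x := by
  simp [refl_eq he]

lemma refl_inner (he : ‖e‖ = 1) (x : Euc N) : (inner ℝ (reflect N e x) e : ℝ) = - inner ℝ x e := by
  simp only [reflect, inner_sub_left, inner_smul_left, real_inner_self_eq_norm_sq, he]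
  simp
  ring

lemma refl_norm_sub (he : ‖e‖ = 1) (x y : Euc N) :
    ‖reflect N e x - reflect N e y‖ = ‖x - y‖ := by
  rw [refl_eq he, refl_eq he, ← map_sub, LinearIsometryEquiv.norm_map]

lemma refl_norm (he : ‖e‖ = 1) (x : Euc N) : ‖reflect N e x‖ = ‖x‖ := by
  rw [refl_eq he, LinearIsometryEquiv.norm_map]

lemma refl_of_zero {x : Euc N} (h : (inner ℝ x e : ℝ) = 0) : reflect N e x = x := by
  simp [reflect, h]

lemma refl_mp (he : ‖e‖ = 1) : MeasurePreserving (reflect N e) := by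
  rw [refl_fun_eq he]; exact LinearIsometryEquiv.measurePreserving _

lemma refl_cont (he : ‖e‖ = 1) : Continuous (reflect N e) := by
  rw [refl_fun_eq he]; exact LinearIsometryEquiv.continuous _

lemma refl_emb (he : ‖e‖ = 1) : MeasurableEmbedding (reflect N e) := by
  rw [refl_fun_eq he]
  exact ((ℝ ∙ e)ᗮ.reflection).toHomeomorph.measurableEmbedding

lemma refl_norm_sub_sq (he : ‖e‖ = 1) (x y : Euc N) :
    ‖x - reflect N e y‖ ^ 2 = ‖x - y‖ ^ 2 + 4 * inner ℝ x e * inner ℝ y e := by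
  have : x - reflect N e y = (x - y) + (2 * (inner ℝ y e : ℝ)) • e := by
    simp only [reflect]; module
  rw [this, norm_add_sq_real, norm_smul, he, inner_smul_right, inner_sub_left]
  simp [mul_pow]
  ring

lemma kern_le (he : ‖e‖ = 1) {s : ℝ} (hs : 0 < s) {x y : Euc N} (hx : 0 ≤ (inner ℝ x e : ℝ))
    (hy : 0 ≤ (inner ℝ y e : ℝ)) : kern N s x y ≤ kern N s x (reflect N e y) := by
  unfold kern
  apply Real.rpow_le_rpow (norm_nonneg _) _ (by positivity)
  have := refl_norm_sub_sq he x y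
  have h4 : 0 ≤ 4 * inner ℝ x e * (inner ℝ y e : ℝ) := by positivity
  exact le_of_sq_le_sq (by linarith) (norm_nonneg _)

lemma kern_lt (he : ‖e‖ = 1) {s : ℝ} (hs : 0 < s) {x y : Euc N} (hx : 0 < (inner ℝ x e : ℝ))
    (hy : 0 < (inner ℝ y e : ℝ)) : kern N s x y < kern N s x (reflect N e y) := by
  unfold kern
  apply Real.rpow_lt_rpow (norm_nonneg _) _ (by positivity)
  have := refl_norm_sub_sq he x y
  have h4 : 0 < 4 * inner ℝ x e * (inner ℝ y e : ℝ) := by positivity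
  exact lt_of_pow_lt_pow_left₀ 2 (norm_nonneg _) (by linarith)

lemma kern_nonneg (s : ℝ) (x y : Euc N) : 0 ≤ kern N s x y := by unfold kern; positivity

lemma kern_pos (s : ℝ) {x y : Euc N} (h : x ≠ y) : 0 < kern N s x y := by
  unfold kern
  have : 0 < ‖x - y‖ := norm_pos_iff.2 (sub_ne_zero.2 h)
  positivity

lemma kern_rr (he : ‖e‖ = 1) (s : ℝ) (x y : Euc N) :
    kern N s (reflect N e x) (reflect N e y) = kern N s x y := by
  unfold kern; rw [refl_norm_sub he]

lemma kern_rl (he : ‖e‖ = 1) (s : ℝ) (x y : Euc N) :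
    kern N s (reflect N e x) y = kern N s x (reflect N e y) := by
  rw [← kern_rr he, refl_invol he]

lemma kern_meas (s : ℝ) : Measurable (fun q : Euc N × Euc N => kern N s q.1 q.2) := by
  unfold kern; fun_prop

/-- four-point energy density -/
def gsum (N : ℕ) (s : ℝ) (e : Euc N) (u : Euc N → ℝ) (x y : Euc N) : ℝ :=
  ((u x - u y) ^ 2 + (u (reflect N e x) - u (reflect N e y)) ^ 2) / kern N s x y
  + ((u x - u (reflect N e y)) ^ 2 + (u (reflect N e x) - u y) ^ 2) / kern N s x (reflect N e y)

lemma gsum_r (he : ‖e‖ = 1) (s : ℝ) (u : Euc N → ℝ) (x y : Euc N) :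
    gsum N s e u x (reflect N e y) = gsum N s e u x y := by
  unfold gsum; rw [refl_invol he]; ring

lemma gsum_l (he : ‖e‖ = 1) (s : ℝ) (u : Euc N → ℝ) (x y : Euc N) :
    gsum N s e u (reflect N e x) y = gsum N s e u x y := by
  unfold gsum; rw [refl_invol he, kern_rl he, kern_rr he]; ring

lemma pol_pos {u : Euc N → ℝ} {x : Euc N} (hx : 0 ≤ (inner ℝ x e : ℝ)) :
    polarize N e u x = min (u x) (u (reflect N e x)) := by simp [polarize, hx]

lemma pol_refl (he : ‖e‖ = 1) {u : Euc N → ℝ} {x : Euc N} (hx : 0 ≤ (inner ℝ x e : ℝ)) :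
    polarize N e u (reflect N e x) = max (u x) (u (reflect N e x)) := by
  rcases hx.eq_or_lt with h | h
  · rw [refl_of_zero h.symm, pol_pos hx, refl_of_zero h.symm]; simp
  · unfold polarize
    rw [refl_inner he, if_neg (by linarith), refl_invol he, max_comm]

lemma gsum_pol_le (he : ‖e‖ = 1) {s : ℝ} (hs : 0 < s) (u : Euc N → ℝ) {x y : Euc N}
    (hx : 0 ≤ (inner ℝ x e : ℝ)) (hy : 0 ≤ (inner ℝ y e : ℝ)) :
    gsum N s e (polarize N e u) x y ≤ gsum N s e u x y := by
  by_cases hxy : x = y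
  · subst hxy
    unfold gsum
    rw [pol_pos hx, pol_refl he hx]
    rcases le_total (u x) (u (reflect N e x)) with h | h <;> simp [h, add_comm]
  have hk := kern_pos s hxy
  have hle := kern_le he hs hx hy
  have hinv : (kern N s x (reflect N e y))⁻¹ ≤ (kern N s x y)⁻¹ := inv_anti₀ hk hle
  unfold gsum
  rw [pol_pos hx, pol_refl he hx, pol_pos hy, pol_refl he hy]
  simp only [div_eq_mul_inv]
  rcases le_total (u x) (u (reflect N e x)) with h | h <;>
  rcases le_total (u y) (u (reflect N e y)) with h' | h' <;> simp only [h, h', min_eq_left,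
    min_eq_right, max_eq_left, max_eq_right] <;>
  nlinarith [mul_nonneg (mul_nonneg (sub_nonneg.2 h) (sub_nonneg.2 h')) (sub_nonneg.2 hinv)]

lemma gsum_pol_lt (he : ‖e‖ = 1) {s : ℝ} (hs : 0 < s) (u : Euc N → ℝ) {x y : Euc N}
    (hx : 0 < (inner ℝ x e : ℝ)) (hy : 0 < (inner ℝ y e : ℝ))
    (h : u x < u (reflect N e x)) (h' : u (reflect N e y) < u y) :
    gsum N s e (polarize N e u) x y < gsum N s e u x y := by
  have hxy : x ≠ y := by rintro rfl; linarith
  have hk := kern_pos s hxy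
  have hle := kern_lt he hs hx hy
  have hinv : (kern N s x (reflect N e y))⁻¹ < (kern N s x y)⁻¹ := inv_strictAnti₀ hk hle
  unfold gsum
  rw [pol_pos hx.le, pol_refl he hx.le, pol_pos hy.le, pol_refl he hy.le]
  simp only [div_eq_mul_inv]
  simp only [h.le, h'.le, min_eq_left, min_eq_right, max_eq_left, max_eq_right]
  nlinarith [mul_pos (mul_pos (sub_pos.2 h) (sub_pos.2 h')) (sub_pos.2 hinv)]

lemma gsum_pol_le' (he : ‖e‖ = 1) {s : ℝ} (hs : 0 < s) (u : Euc N → ℝ) (x y : Euc N) :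
    gsum N s e (polarize N e u) x y ≤ gsum N s e u x y := by
  have key : ∀ x y : Euc N, 0 ≤ (inner ℝ x e : ℝ) →
      gsum N s e (polarize N e u) x y ≤ gsum N s e u x y := by
    intro x y hx
    rcases le_total 0 (inner ℝ y e : ℝ) with hy | hy
    · exact gsum_pol_le he hs u hx hy
    · rw [← gsum_r he s _ x y, ← gsum_r he s u x y]
      exact gsum_pol_le he hs u hx (by rw [refl_inner he]; linarith)
  rcases le_total 0 (inner ℝ x e : ℝ) with hx | hx
  · exact key x y hx
  · rw [← gsum_l he s _ x y, ← gsum_l he s u x y]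
    exact key _ _ (by rw [refl_inner he]; linarith)

lemma pol_meas (he : ‖e‖ = 1) {u : Euc N → ℝ} (hu : Measurable u) :
    Measurable (polarize N e u) := by
  unfold polarize
  have hr := (refl_cont he).measurable
  apply Measurable.ite
  · exact measurableSet_le measurable_const (by fun_prop)
  · exact hu.min (hu.comp hr)
  · exact hu.max (hu.comp hr)

lemma pol_cases (u : Euc N → ℝ) (x : Euc N) (he : ‖e‖ = 1) :
    (polarize N e u x = u x ∧ polarize N e u (reflect N e x) = u (reflect N e x)) ∨
    (polarize N e u x = u (reflect N e x) ∧ polarize N e u (reflect N e x) = u x) := by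
  have key : ∀ x : Euc N, 0 ≤ (inner ℝ x e : ℝ) →
      (polarize N e u x = u x ∧ polarize N e u (reflect N e x) = u (reflect N e x)) ∨
      (polarize N e u x = u (reflect N e x) ∧ polarize N e u (reflect N e x) = u x) := by
    intro x hx
    rw [pol_pos hx, pol_refl he hx]
    rcases le_total (u x) (u (reflect N e x)) with h | h <;> simp [h]
  rcases le_total 0 (inner ℝ x e : ℝ) with hx | hx
  · exact key x hx
  · have := key (reflect N e x) (by rw [refl_inner he]; linarith)
    rw [refl_invol he] at this
    tauto

end Refl

section Foliated
variable {N : ℕ}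

lemma fol_key {u : Euc N → ℝ} (hc : Continuous u) {p : Euc N}
    (hp : ∀ e : Euc N, ‖e‖ = 1 → 0 < (inner ℝ e p : ℝ) → ∀ x : Euc N, 0 ≤ (inner ℝ x e : ℝ) →
      u (reflect N e x) ≤ u x) (hp1 : ‖p‖ = 1)
    {x y : Euc N} (hxy : ‖x‖ = ‖y‖) (h : (inner ℝ y p : ℝ) ≤ inner ℝ x p) : u y ≤ u x := by
  by_cases hne : x = y
  · rw [hne]
  set d := x - y with hd
  have hd0 : 0 < ‖d‖ := norm_pos_iff.2 (sub_ne_zero.2 hne)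
  have hxd : 2 * (inner ℝ x d : ℝ) = ‖d‖ ^ 2 := by
    rw [hd, norm_sub_sq_real, inner_sub_right, real_inner_self_eq_norm_sq, ← hxy]; ring
  have hdp : 0 ≤ (inner ℝ d p : ℝ) := by rw [hd, inner_sub_left]; linarith
  -- non-normalized perturbed direction
  let f : ℝ → Euc N := fun t => d + t • p
  have hf : Continuous f := by fun_prop
  let z : ℝ → Euc N := fun t => x - (2 * (inner ℝ x (f t) : ℝ) / ‖f t‖ ^ 2) • f t
  have hf0 : f 0 = d := by simp [f]
  have hz0 : z 0 = y := by
    simp only [z, hf0, hxd]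
    rw [div_self (by positivity)]
    simp [hd]
  have hzc : ContinuousAt z 0 := by
    have : ‖f 0‖ ^ 2 ≠ 0 := by rw [hf0]; positivity
    have h1 : ContinuousAt f 0 := hf.continuousAt
    have h2 : ContinuousAt (fun t => (inner ℝ x (f t) : ℝ)) 0 := by fun_prop
    have h3 : ContinuousAt (fun t => ‖f t‖ ^ 2) 0 := by fun_prop
    exact continuousAt_const.sub (((continuousAt_const.mul h2).div h3 this).smul h1)
  have hlim : Tendsto (fun t => u (z t)) (𝓝[>] 0) (𝓝 (u y)) := by
    have := (hc.continuousAt (x := z 0)).comp hzc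
    rw [← hz0]
    exact this.tendsto.mono_left nhdsWithin_le_nhds
  apply le_of_tendsto hlim
  have hpos : ∀ᶠ t in 𝓝[>] (0 : ℝ), 0 < (inner ℝ x (f t) : ℝ) := by
    have h2 : ContinuousAt (fun t => (inner ℝ x (f t) : ℝ)) 0 := by fun_prop
    apply nhdsWithin_le_nhds
    apply h2.eventually (lt_mem_nhds _)
    simp only [hf0]; nlinarith
  filter_upwards [hpos, self_mem_nhdsWithin] with t ht ht0
  have ht0 : 0 < t := ht0
  have hft : f t ≠ 0 := by intro h0; rw [h0] at ht; simp at ht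
  have hn : 0 < ‖f t‖ := norm_pos_iff.2 hft
  have hfp : 0 < (inner ℝ (f t) p : ℝ) := by
    simp only [f, inner_add_left, inner_smul_left, real_inner_self_eq_norm_sq, hp1]
    simp; linarith
  have := hp (‖f t‖⁻¹ • f t) (by rw [norm_smul]; simp [hn.ne'])
    (by rw [real_inner_smul_left]; positivity) x (by rw [real_inner_smul_right]; positivity)
  have hzeq : reflect N (‖f t‖⁻¹ • f t) x = z t := by
    simp only [z, reflect, real_inner_smul_right, smul_smul]
    congr 2
    field_simp
  rwa [hzeq] at this

lemma fol_of_dir (hN : 2 ≤ N) {u : Euc N → ℝ} {p : Euc N} (hp1 : ‖p‖ = 1)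
    (key : ∀ x y : Euc N, ‖x‖ = ‖y‖ → (inner ℝ y p : ℝ) ≤ inner ℝ x p → u y ≤ u x) :
    FoliatedSchwarz N p u := by
  obtain ⟨q, hq1, hqp⟩ : ∃ q : Euc N, ‖q‖ = 1 ∧ (inner ℝ q p : ℝ) = 0 := by
    have : Fact (Module.finrank ℝ (Euc N) = (N - 1) + 1) := ⟨by simp; omega⟩
    have hp0 : p ≠ 0 := by intro h; simp [h] at hp1
    have hr := Submodule.finrank_orthogonal_span_singleton (𝕜 := ℝ) (n := N - 1) hp0
    have : Nontrivial (ℝ ∙ p)ᗮ := Module.nontrivial_of_finrank_pos (R := ℝ) (by omega)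
    obtain ⟨⟨v, hv⟩, hv0⟩ := exists_ne (0 : (ℝ ∙ p)ᗮ)
    have hv0' : v ≠ 0 := by simpa using hv0
    have hvn : 0 < ‖v‖ := norm_pos_iff.2 hv0'
    refine ⟨‖v‖⁻¹ • v, by rw [norm_smul]; simp [hvn.ne'], ?_⟩
    rw [Submodule.mem_orthogonal_singleton_iff_inner_left] at hv
    rw [real_inner_smul_left, hv, mul_zero]
  let Z : ℝ → ℝ → Euc N := fun r θ => |r| • (Real.cos θ • p + Real.sin θ • q)
  have hZp : ∀ r θ, (inner ℝ (Z r θ) p : ℝ) = |r| * Real.cos θ := by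
    intro r θ
    simp only [Z, real_inner_smul_left, inner_add_left, real_inner_self_eq_norm_sq, hp1, hqp]
    ring
  have hZn : ∀ r θ, ‖Z r θ‖ = |r| := by
    intro r θ
    have h1 : ‖Real.cos θ • p + Real.sin θ • q‖ ^ 2 = 1 := by
      rw [norm_add_sq_real, norm_smul, norm_smul, hp1, hq1, real_inner_smul_left,
        real_inner_smul_right, real_inner_comm, hqp]
      simp
    have h2 : ‖Real.cos θ • p + Real.sin θ • q‖ = 1 := by
      exact (pow_eq_one_iff_of_nonneg (norm_nonneg _) two_ne_zero).1 h1
    simp only [Z]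
    rw [norm_smul, h2]; simp
  refine ⟨fun r θ => u (Z r θ), ?_, ?_⟩
  · intro r a ha b hb hab
    apply key
    · rw [hZn, hZn]
    · rw [hZp, hZp]
      exact mul_le_mul_of_nonneg_left (Real.cos_le_cos_of_nonneg_of_le_pi ha.1 hb.2 hab)
        (abs_nonneg _)
  · intro x hx
    have hxn : 0 < ‖x‖ := norm_pos_iff.2 hx
    have hb := abs_real_inner_le_norm x p
    rw [hp1, mul_one] at hb
    have hb' := abs_le.1 hb
    have e1 : ‖Z ‖x‖ (Real.arccos ((inner ℝ x p : ℝ) / ‖x‖))‖ = ‖x‖ := by rw [hZn]; simp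
    have e2 : (inner ℝ (Z ‖x‖ (Real.arccos ((inner ℝ x p : ℝ) / ‖x‖))) p : ℝ) = inner ℝ x p := by
      rw [hZp, Real.cos_arccos, abs_of_pos hxn]
      · field_simp
      · rw [le_div_iff₀ hxn]; linarith
      · rw [div_le_iff₀ hxn]; linarith
    apply le_antisymm
    · exact key _ _ e1 e2.ge
    · exact key _ _ e1.symm e2.le

lemma refl_setInt {e : Euc N} (he : ‖e‖ = 1) (ρ : ℝ) (f : Euc N → ℝ) :
    ∫ x in Metric.ball (0 : Euc N) ρ, f (reflect N e x) = ∫ x in Metric.ball (0 : Euc N) ρ, f x := by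
  have h := (refl_mp he).setIntegral_preimage_emb (refl_emb he) f (Metric.ball (0 : Euc N) ρ)
  have h2 : reflect N e ⁻¹' Metric.ball (0 : Euc N) ρ = Metric.ball (0 : Euc N) ρ := by
    ext x; simp [refl_norm he]
  rwa [h2] at h

lemma cont_int_ball {f : Euc N → ℝ} (hf : Continuous f) (ρ : ℝ) :
    IntegrableOn f (Metric.ball (0 : Euc N) ρ) :=
  (hf.continuousOn.integrableOn_compact (isCompact_closedBall 0 ρ)).mono_set
    Metric.ball_subset_closedBall

lemma mom_eq {u : Euc N → ℝ} (hc : Continuous u) {e : Euc N} (he : ‖e‖ = 1) (ρ : ℝ) :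
    2 * ∫ x in Metric.ball (0 : Euc N) ρ, u x * inner ℝ x e =
      ∫ x in Metric.ball (0 : Euc N) ρ, (u x - u (reflect N e x)) * inner ℝ x e := by
  have hr := refl_cont he
  have h1 := refl_setInt he ρ (fun x => u x * inner ℝ x e)
  simp only [refl_inner he] at h1
  have i1 : IntegrableOn (fun x => u x * (inner ℝ x e : ℝ)) (Metric.ball (0 : Euc N) ρ) :=
    cont_int_ball (by fun_prop) ρ
  have i2 : IntegrableOn (fun x => u (reflect N e x) * -(inner ℝ x e : ℝ))
      (Metric.ball (0 : Euc N) ρ) := cont_int_ball (by fun_prop) ρ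
  rw [two_mul]
  nth_rw 2 [← h1]
  rw [← integral_add i1 i2]
  congr 1; ext x; ring

/-- The dichotomy in all directions forces foliated Schwarz symmetry. -/
lemma fol_main (hN : 2 ≤ N) {u : Euc N → ℝ} (hc : Continuous u)
    (hd : ∀ e : Euc N, ‖e‖ = 1 →
      (∀ x : Euc N, 0 ≤ (inner ℝ x e : ℝ) → u x ≤ u (reflect N e x)) ∨
      (∀ x : Euc N, 0 ≤ (inner ℝ x e : ℝ) → u (reflect N e x) ≤ u x)) :
    ∃ p : Euc N, ‖p‖ = 1 ∧ FoliatedSchwarz N p u := by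
  let m : ℝ → Euc N := fun ρ => ∫ x in Metric.ball (0 : Euc N) ρ, u x • x
  have hm : ∀ ρ e, (inner ℝ (m ρ) e : ℝ) =
      ∫ x in Metric.ball (0 : Euc N) ρ, u x * inner ℝ x e := by
    intro ρ e
    have hi : IntegrableOn (fun x => u x • x) (Metric.ball (0 : Euc N) ρ) := by
      have hcc : Continuous (fun x : Euc N => u x • x) := by fun_prop
      exact (hcc.continuousOn.integrableOn_compact (isCompact_closedBall 0 ρ)).mono_set
        Metric.ball_subset_closedBall
    rw [real_inner_comm]
    have := integral_inner (𝕜 := ℝ) hi e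
    rw [← this]
    congr 1; ext x
    rw [real_inner_smul_right, real_inner_comm]
  by_cases h0 : ∃ ρ, m ρ ≠ 0
  · obtain ⟨ρ, hρ⟩ := h0
    have hn : 0 < ‖m ρ‖ := norm_pos_iff.2 hρ
    have hp1 : ‖‖m ρ‖⁻¹ • m ρ‖ = 1 := by rw [norm_smul]; simp [hn.ne']
    refine ⟨‖m ρ‖⁻¹ • m ρ, hp1, fol_of_dir hN hp1 ?_⟩
    intro x y hxy h
    refine fol_key hc ?_ hp1 hxy h
    intro e he hep
    rcases hd e he with h1 | h1
    · exfalso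
      rw [real_inner_smul_right, real_inner_comm, hm] at hep
      have hpos : 0 < ∫ x in Metric.ball (0 : Euc N) ρ, u x * (inner ℝ x e : ℝ) :=
        pos_of_mul_pos_right hep (by positivity)
      have h2 := mom_eq hc he ρ
      have h3 : ∫ x in Metric.ball (0 : Euc N) ρ, (u x - u (reflect N e x)) * (inner ℝ x e : ℝ) ≤ 0 := by
        apply integral_nonpos
        intro x
        show (u x - u (reflect N e x)) * (inner ℝ x e : ℝ) ≤ 0
        rcases le_total 0 (inner ℝ x e : ℝ) with hx | hx
        · exact mul_nonpos_of_nonpos_of_nonneg (by linarith [h1 x hx]) hx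
        · have := h1 (reflect N e x) (by rw [refl_inner he]; linarith)
          rw [refl_invol he] at this
          exact mul_nonpos_of_nonneg_of_nonpos (by linarith) hx
      linarith
    · exact h1
  · push Not at h0
    -- radial case
    have hw : ∀ e : Euc N, ‖e‖ = 1 → ∀ x : Euc N, u x = u (reflect N e x) := by
      intro e he x
      have hr := refl_cont he
      let g : Euc N → ℝ := fun x => (u x - u (reflect N e x)) * (inner ℝ x e : ℝ)
      have hg : Continuous g := by fun_prop
      have hz : ∀ ρ, ∫ x in Metric.ball (0 : Euc N) ρ, g x = 0 := by
        intro ρ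
        have h2 := mom_eq hc he ρ
        rw [← hm, h0 ρ] at h2
        simpa using h2.symm
      have hsgn : (∀ x, 0 ≤ g x) ∨ (∀ x, 0 ≤ - g x) := by
        rcases hd e he with h1 | h1
        · right
          intro x
          show 0 ≤ - ((u x - u (reflect N e x)) * (inner ℝ x e : ℝ))
          rcases le_total 0 (inner ℝ x e : ℝ) with hx | hx
          · nlinarith [h1 x hx]
          · have := h1 (reflect N e x) (by rw [refl_inner he]; linarith)
            rw [refl_invol he] at this
            nlinarith
        · left
          intro x
          show 0 ≤ ((u x - u (reflect N e x)) * (inner ℝ x e : ℝ))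
          rcases le_total 0 (inner ℝ x e : ℝ) with hx | hx
          · nlinarith [h1 x hx]
          · have := h1 (reflect N e x) (by rw [refl_inner he]; linarith)
            rw [refl_invol he] at this
            nlinarith
      have gen : ∀ g : Euc N → ℝ, Continuous g → (∀ ρ, ∫ x in Metric.ball (0 : Euc N) ρ, g x = 0) →
          (∀ x, 0 ≤ g x) → ∀ x, g x = 0 := by
        intro g hg hz hs x
        have hae := (setIntegral_eq_zero_iff_of_nonneg_ae (ae_of_all _ hs)
          (cont_int_ball hg (‖x‖ + 1))).1 (hz (‖x‖ + 1))
        have := Measure.eqOn_open_of_ae_eq hae Metric.isOpen_ball hg.continuousOn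
          continuousOn_const
        exact this (by simp)
      have hg0 : g x = 0 := by
        rcases hsgn with h | h
        · exact gen g hg hz h x
        · have := gen (fun x => - g x) hg.neg (fun ρ => by rw [integral_neg, hz, neg_zero]) h x
          simpa using this
      rcases mul_eq_zero.1 hg0 with h | h
      · linarith
      · rw [refl_of_zero h]
    have : Nontrivial (Euc N) := by
      have : Nonempty (Fin N) := ⟨⟨0, by omega⟩⟩
      infer_instance
    obtain ⟨p, hp1⟩ := exists_norm_eq (Euc N) (zero_le_one (α := ℝ))
    refine ⟨p, hp1, fol_of_dir hN hp1 ?_⟩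
    intro x y hxy h
    exact fol_key hc (fun e he _ x _ => (hw e he x).ge) hp1 hxy h

end Foliated

section Energy
variable {N : ℕ} {e : Euc N}

lemma cNs_pos {s : ℝ} (hs : s ∈ Set.Ioo (0 : ℝ) 1) : 0 < cNs N s := by
  unfold cNs
  have h1 := hs.1
  have h2 := hs.2
  have := Real.Gamma_pos_of_pos (s := (N : ℝ) / 2 + s) (by positivity)
  have := Real.Gamma_pos_of_pos (s := 1 - s) (by linarith)
  have := Real.pi_pos
  positivity

lemma mem_reg {R : ℝ} (hR : 0 < R) (q : Euc N × Euc N) :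
    q ∈ reg N (Metric.ball (0 : Euc N) R) ↔ ‖q.1‖ ≤ R ∨ ‖q.2‖ ≤ R := by
  simp [reg, closure_ball (0 : Euc N) hR.ne']

lemma reg_meas (Ω : Set (Euc N)) : MeasurableSet (reg N Ω) :=
  (isClosed_closure.measurableSet.preimage measurable_fst).union
    (isClosed_closure.measurableSet.preimage measurable_snd)

/-- Product maps by norm preserving, measure preserving maps preserve the region measure. -/
lemma map_mp {R : ℝ} (hR : 0 < R) {f g : Euc N → Euc N} (hf : MeasurePreserving f)
    (hg : MeasurePreserving g) (nf : ∀ x, ‖f x‖ = ‖x‖) (ng : ∀ x, ‖g x‖ = ‖x‖) :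
    MeasurePreserving (Prod.map f g)
      (volume.restrict (reg N (Metric.ball (0 : Euc N) R)))
      (volume.restrict (reg N (Metric.ball (0 : Euc N) R))) := by
  have h : MeasurePreserving (Prod.map f g) (volume : Measure (Euc N × Euc N)) volume := hf.prod hg
  have h2 := h.restrict_preimage (reg_meas (Metric.ball (0 : Euc N) R))
  have h3 : Prod.map f g ⁻¹' reg N (Metric.ball (0 : Euc N) R) = reg N (Metric.ball (0 : Euc N) R) := by
    ext q
    rw [mem_preimage, mem_reg hR, mem_reg hR]
    simp [nf, ng]
  rwa [h3] at h2

lemma dens_meas (s : ℝ) {u : Euc N → ℝ} (hu : Measurable u) :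
    Measurable (fun q : Euc N × Euc N => (u q.1 - u q.2) ^ 2 / kern N s q.1 q.2) := by
  have := kern_meas (N := N) s
  fun_prop

lemma dens_nonneg (s : ℝ) (u : Euc N → ℝ) (x y : Euc N) :
    0 ≤ (u x - u y) ^ 2 / kern N s x y := div_nonneg (sq_nonneg _) (kern_nonneg s x y)

lemma semi_int (s : ℝ) (Ω : Set (Euc N)) {u : Euc N → ℝ} (hu : Measurable u) :
    semiSq N s Ω u < ⊤ ↔
    IntegrableOn (fun q : Euc N × Euc N => (u q.1 - u q.2) ^ 2 / kern N s q.1 q.2) (reg N Ω) := by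
  unfold semiSq IntegrableOn
  rw [lt_top_iff_ne_top, lintegral_ofReal_ne_top_iff_integrable
    (dens_meas s hu).aestronglyMeasurable (ae_of_all _ fun q => dens_nonneg s u _ _)]

lemma bform_self (s : ℝ) (Ω : Set (Euc N)) {u : Euc N → ℝ} (hu : Measurable u) :
    bform N s Ω u u = (semiSq N s Ω u).toReal := by
  unfold bform semiSq
  rw [← integral_eq_lintegral_of_nonneg_ae (ae_of_all _ fun q => dens_nonneg s u _ _)
    (dens_meas s hu).aestronglyMeasurable]
  congr 1; ext q; ring

lemma gsum_lint (he : ‖e‖ = 1) {R : ℝ} (hR : 0 < R) (s : ℝ) {u : Euc N → ℝ} (hu : Measurable u) :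
    ∫⁻ q in reg N (Metric.ball (0 : Euc N) R), ENNReal.ofReal (gsum N s e u q.1 q.2) =
      4 * semiSq N s (Metric.ball (0 : Euc N) R) u := by
  let F : Euc N × Euc N → ℝ≥0∞ := fun q =>
    ENNReal.ofReal ((u q.1 - u q.2) ^ 2 / kern N s q.1 q.2)
  have hF : Measurable F := (dens_meas s hu).ennreal_ofReal
  have hσ := refl_mp he
  have hi := MeasurePreserving.id (volume : Measure (Euc N))
  have nσ := refl_norm he
  have m1 := map_mp hR hσ hσ nσ nσ
  have m2 := map_mp hR hi hσ (fun _ => rfl) nσ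
  have m3 := map_mp hR hσ hi nσ (fun _ => rfl)
  have key : ∀ q : Euc N × Euc N, ENNReal.ofReal (gsum N s e u q.1 q.2) =
      F q + F (Prod.map (reflect N e) (reflect N e) q) + F (Prod.map id (reflect N e) q)
        + F (Prod.map (reflect N e) id q) := by
    intro q
    simp only [F, Prod.map, id]
    rw [← ENNReal.ofReal_add (dens_nonneg _ _ _ _) (dens_nonneg _ _ _ _),
      ← ENNReal.ofReal_add _ (dens_nonneg _ _ _ _), ← ENNReal.ofReal_add _ (dens_nonneg _ _ _ _)]
    · congr 1
      unfold gsum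
      rw [kern_rr he, kern_rl he]
      ring
    · exact add_nonneg (add_nonneg (dens_nonneg _ _ _ _) (dens_nonneg _ _ _ _)) (dens_nonneg _ _ _ _)
    · exact add_nonneg (dens_nonneg _ _ _ _) (dens_nonneg _ _ _ _)
  simp only [key]
  have c1 : Measurable fun q => F (Prod.map (reflect N e) (reflect N e) q) := hF.comp m1.measurable
  have c2 : Measurable fun q => F (Prod.map id (reflect N e) q) := hF.comp m2.measurable
  have c3 : Measurable fun q => F (Prod.map (reflect N e) id q) := hF.comp m3.measurable
  rw [lintegral_add_right _ c3, lintegral_add_right _ c2, lintegral_add_right _ c1, m1.lintegral_comp hF, m2.lintegral_comp hF,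
    m3.lintegral_comp hF]
  show semiSq N s _ u + semiSq N s _ u + semiSq N s _ u + semiSq N s _ u = _
  ring

lemma gsum_meas (he : ‖e‖ = 1) (s : ℝ) {u : Euc N → ℝ} (hu : Measurable u) :
    Measurable (fun q : Euc N × Euc N => gsum N s e u q.1 q.2) := by
  have hr := (refl_cont he).measurable
  have p2 : Measurable (fun q : Euc N × Euc N => (q.1, reflect N e q.2)) :=
    measurable_fst.prodMk (hr.comp measurable_snd)
  have p3 : Measurable (fun q : Euc N × Euc N => (reflect N e q.1, q.2)) :=
    (hr.comp measurable_fst).prodMk measurable_snd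
  have p4 : Measurable (fun q : Euc N × Euc N => (reflect N e q.1, reflect N e q.2)) :=
    (hr.comp measurable_fst).prodMk (hr.comp measurable_snd)
  have d1 := dens_meas s hu
  have d2 := d1.comp p2
  have d3 := d1.comp p3
  have d4 := d1.comp p4
  have hsum := ((d1.add d4).add d2).add d3
  convert hsum using 1
  funext q
  simp only [Pi.add_apply, Function.comp_apply, gsum]
  rw [kern_rr he, kern_rl he]
  ring

lemma semi_pol_le (he : ‖e‖ = 1) {R : ℝ} (hR : 0 < R) {s : ℝ} (hs : 0 < s) {u : Euc N → ℝ}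
    (hu : Measurable u) :
    semiSq N s (Metric.ball (0 : Euc N) R) (polarize N e u) ≤
      semiSq N s (Metric.ball (0 : Euc N) R) u := by
  have h : 4 * semiSq N s (Metric.ball (0 : Euc N) R) (polarize N e u) ≤
      4 * semiSq N s (Metric.ball (0 : Euc N) R) u := by
    rw [← gsum_lint he hR s hu, ← gsum_lint he hR s (pol_meas he hu)]
    exact lintegral_mono fun q => ENNReal.ofReal_le_ofReal (gsum_pol_le' he hs u _ _)
  exact (ENNReal.mul_le_mul_iff_right (by norm_num) (by norm_num)).1 h

/-- open sets where an a.e. property on the region fails -/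
lemma reg_open {R : ℝ} (hR : 0 < R) {U : Set (Euc N × Euc N)} (hU : IsOpen U)
    (hUB : ∀ q ∈ U, ‖q.1‖ < R) {p : Euc N × Euc N → Prop}
    (hp : ∀ᵐ q ∂(volume.restrict (reg N (Metric.ball (0 : Euc N) R))), p q)
    (hn : ∀ q ∈ U, ¬ p q) : U = ∅ := by
  rw [← hU.measure_eq_zero_iff (volume : Measure (Euc N × Euc N))]
  rw [ae_restrict_iff' (reg_meas _)] at hp
  refine measure_mono_null ?_ hp
  intro q hq hh
  exact hn q hq (hh ((mem_reg hR q).2 (Or.inl (hUB q hq).le)))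

/-- Equality in the polarization inequality forces the signs to agree. -/
lemma pol_eq_case (he : ‖e‖ = 1) {R : ℝ} (hR : 0 < R) {s : ℝ} (hs : 0 < s) {u : Euc N → ℝ}
    (hc : Continuous u) (hfin : semiSq N s (Metric.ball (0 : Euc N) R) u < ⊤)
    (hE : semiSq N s (Metric.ball (0 : Euc N) R) u ≤
      semiSq N s (Metric.ball (0 : Euc N) R) (polarize N e u)) {x y : Euc N}
    (hx : 0 < (inner ℝ x e : ℝ)) (hy : 0 < (inner ℝ y e : ℝ))
    (hB : ‖x‖ < R ∨ ‖y‖ < R) (h : u x < u (reflect N e x)) (h' : u (reflect N e y) < u y) :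
    False := by
  have hr := refl_cont he
  have hu := hc.measurable
  have hP := pol_meas he hu
  have hae : (fun q : Euc N × Euc N => ENNReal.ofReal (gsum N s e (polarize N e u) q.1 q.2))
      =ᵐ[volume.restrict (reg N (Metric.ball (0 : Euc N) R))]
      (fun q : Euc N × Euc N => ENNReal.ofReal (gsum N s e u q.1 q.2)) := by
    apply ae_eq_of_ae_le_of_lintegral_le
    · exact ae_of_all _ fun q => ENNReal.ofReal_le_ofReal (gsum_pol_le' he hs u _ _)
    · rw [gsum_lint he hR s hP]
      exact ENNReal.mul_ne_top (by norm_num) (lt_of_le_of_lt (semi_pol_le he hR hs hu) hfin).ne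
    · exact (gsum_meas he s hu).ennreal_ofReal.aemeasurable
    · rw [gsum_lint he hR s hP, gsum_lint he hR s hu]
      gcongr
  have nonneg : ∀ (v : Euc N → ℝ) (x y : Euc N), 0 ≤ gsum N s e v x y := by
    intro v x y
    unfold gsum
    have := kern_nonneg s x y
    have := kern_nonneg s x (reflect N e y)
    positivity
  have strict : ∀ x y : Euc N, 0 < (inner ℝ x e : ℝ) → 0 < (inner ℝ y e : ℝ) →
      u x < u (reflect N e x) → u (reflect N e y) < u y →
      ENNReal.ofReal (gsum N s e (polarize N e u) x y) ≠ ENNReal.ofReal (gsum N s e u x y) := by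
    intro x y hx hy h h' heq
    have h1 := gsum_pol_lt he hs u hx hy h h'
    rw [ENNReal.ofReal_eq_ofReal_iff (nonneg _ _ _) (nonneg _ _ _)] at heq
    linarith
  have gsymm : ∀ (v : Euc N → ℝ) (x y : Euc N), gsum N s e v x y = gsum N s e v y x := by
    intro v x y
    have k1 : kern N s x y = kern N s y x := by unfold kern; rw [norm_sub_rev]
    have k2 : kern N s x (reflect N e y) = kern N s y (reflect N e x) := by
      rw [← kern_rl he]; unfold kern; rw [norm_sub_rev]
    unfold gsum
    rw [k1, k2]; ring
  rcases hB with hB | hB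
  · let U : Set (Euc N × Euc N) := {q | ‖q.1‖ < R ∧ 0 < (inner ℝ q.1 e : ℝ) ∧
      0 < (inner ℝ q.2 e : ℝ) ∧ u q.1 < u (reflect N e q.1) ∧ u (reflect N e q.2) < u q.2}
    have hU : IsOpen U := by
      simp only [U, ofPred_and]
      refine IsOpen.inter ?_ (IsOpen.inter ?_ (IsOpen.inter ?_ (IsOpen.inter ?_ ?_))) <;>
        apply isOpen_lt <;> fun_prop
    have := reg_open hR hU (fun q hq => hq.1) hae
      (fun q hq => strict _ _ hq.2.1 hq.2.2.1 hq.2.2.2.1 hq.2.2.2.2)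
    have hm : (x, y) ∈ U := ⟨hB, hx, hy, h, h'⟩
    rw [this] at hm; exact hm
  · let U : Set (Euc N × Euc N) := {q | ‖q.1‖ < R ∧ 0 < (inner ℝ q.1 e : ℝ) ∧
      0 < (inner ℝ q.2 e : ℝ) ∧ u q.2 < u (reflect N e q.2) ∧ u (reflect N e q.1) < u q.1}
    have hU : IsOpen U := by
      simp only [U, ofPred_and]
      refine IsOpen.inter ?_ (IsOpen.inter ?_ (IsOpen.inter ?_ (IsOpen.inter ?_ ?_))) <;>
        apply isOpen_lt <;> fun_prop
    have := reg_open hR hU (fun q hq => hq.1) hae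
      (fun q hq => by
        show ENNReal.ofReal (gsum N s e (polarize N e u) q.1 q.2) ≠
          ENNReal.ofReal (gsum N s e u q.1 q.2)
        rw [gsymm, gsymm u]
        exact strict _ _ hq.2.2.1 hq.2.1 hq.2.2.2.1 hq.2.2.2.2)
    have hm : (y, x) ∈ U := ⟨hB, hy, hx, h, h'⟩
    rw [this] at hm; exact hm

lemma l2_int (Ω : Set (Euc N)) {u : Euc N → ℝ} (hu : Measurable u) :
    l2sq N Ω u < ⊤ ↔ IntegrableOn (fun x => (u x) ^ 2) Ω := by
  unfold l2sq IntegrableOn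
  rw [lt_top_iff_ne_top, lintegral_ofReal_ne_top_iff_integrable
    (hu.pow_const 2).aestronglyMeasurable (ae_of_all _ fun q => sq_nonneg _)]

/-- The Rayleigh bound. -/
lemma mu1_le {s : ℝ} (hs : s ∈ Set.Ioo (0 : ℝ) 1) (Ω : Set (Euc N)) {v : Euc N → ℝ}
    (hv : memHs N s Ω v) (h0 : ∫ x in Ω, v x = 0) (hA : 0 < ∫ x in Ω, (v x) ^ 2) :
    mu1 N s Ω * (∫ x in Ω, (v x) ^ 2) ≤ cNs N s / 2 * (semiSq N s Ω v).toReal := by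
  set A := ∫ x in Ω, (v x) ^ 2 with hAd
  have hsq : (Real.sqrt A) ^ 2 = A := Real.sq_sqrt hA.le
  have hsp : 0 < Real.sqrt A := Real.sqrt_pos.2 hA
  let c : ℝ := (Real.sqrt A)⁻¹
  have hc2 : c ^ 2 = A⁻¹ := by simp only [c]; rw [inv_pow, hsq]
  have hsemi : semiSq N s Ω (fun x => c * v x) = ENNReal.ofReal (c ^ 2) * semiSq N s Ω v := by
    unfold semiSq
    rw [← lintegral_const_mul _ (dens_meas s hv.1).ennreal_ofReal]
    congr 1; ext q
    rw [← ENNReal.ofReal_mul (sq_nonneg _)]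
    congr 1; ring
  have hl2 : l2sq N Ω (fun x => c * v x) < ⊤ := by
    rw [l2_int Ω (hv.1.const_mul c)]
    have := ((l2_int Ω hv.1).1 hv.2.1).const_mul (c ^ 2)
    refine this.congr (ae_of_all _ fun x => ?_)
    simp only; ring
  have hle : mu1 N s Ω ≤ cNs N s / 2 * (semiSq N s Ω (fun x => c * v x)).toReal := by
    apply csInf_le
    · refine ⟨0, ?_⟩
      rintro t ⟨w, -, -, -, rfl⟩
      have := cNs_pos (N := N) hs
      positivity
    · refine ⟨fun x => c * v x, ⟨hv.1.const_mul c, hl2, ?_⟩, ?_, ?_, rfl⟩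
      · rw [hsemi]; exact ENNReal.mul_lt_top ENNReal.ofReal_lt_top hv.2.2
      · simp only [mul_pow]
        rw [integral_const_mul, ← hAd, hc2, inv_mul_cancel₀ hA.ne']
      · rw [integral_const_mul, h0, mul_zero]
  rw [hsemi, ENNReal.toReal_mul, ENNReal.toReal_ofReal (sq_nonneg _), hc2] at hle
  calc mu1 N s Ω * A ≤ (cNs N s / 2 * (A⁻¹ * (semiSq N s Ω v).toReal)) * A := by gcongr
    _ = _ := by field_simp

/-- An eigenfunction has no more energy than its polarization. -/
lemma eigen_pol (he : ‖e‖ = 1) {R : ℝ} (hR : 0 < R) {s : ℝ} (hs : s ∈ Set.Ioo (0 : ℝ) 1)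
    {u : Euc N → ℝ} (hc : Continuous u) (hu : IsFirstEigen N s (Metric.ball (0 : Euc N) R) u) :
    semiSq N s (Metric.ball (0 : Euc N) R) u ≤
      semiSq N s (Metric.ball (0 : Euc N) R) (polarize N e u) := by
  obtain ⟨hm, hne, h0, hw⟩ := hu
  have hr := refl_cont he
  set P := polarize N e u with hPd
  have hPm : Measurable P := pol_meas he hm.1
  have iu : IntegrableOn (fun x => u x) (Metric.ball (0 : Euc N) R) := cont_int_ball hc R
  have iu2 : IntegrableOn (fun x => u x ^ 2) (Metric.ball (0 : Euc N) R) :=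
    cont_int_ball (by fun_prop) R
  have iur : IntegrableOn (fun x => u (reflect N e x)) (Metric.ball (0 : Euc N) R) :=
    cont_int_ball (by fun_prop) R
  have iur2 : IntegrableOn (fun x => u (reflect N e x) ^ 2) (Metric.ball (0 : Euc N) R) :=
    cont_int_ball (by fun_prop) R
  have iP : IntegrableOn P (Metric.ball (0 : Euc N) R) := by
    refine (iu.norm.add iur.norm).mono' hPm.aestronglyMeasurable (ae_of_all _ fun x => ?_)
    have a1 := norm_nonneg (u x)
    have a2 := norm_nonneg (u (reflect N e x))
    show ‖P x‖ ≤ ‖u x‖ + ‖u (reflect N e x)‖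
    rcases pol_cases u x he with h | h <;> rw [hPd, h.1] <;> linarith
  have iP2 : IntegrableOn (fun x => P x ^ 2) (Metric.ball (0 : Euc N) R) := by
    refine (iu2.add iur2).mono' (hPm.pow_const 2).aestronglyMeasurable (ae_of_all _ fun x => ?_)
    show ‖P x ^ 2‖ ≤ u x ^ 2 + u (reflect N e x) ^ 2
    rw [Real.norm_of_nonneg (sq_nonneg _)]
    rcases pol_cases u x he with h | h <;> rw [hPd, h.1] <;> nlinarith [sq_nonneg (u x), sq_nonneg (u (reflect N e x))]
  have hmp : MeasurePreserving (reflect N e) (volume.restrict (Metric.ball (0 : Euc N) R))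
      (volume.restrict (Metric.ball (0 : Euc N) R)) := by
    have h2 := (refl_mp he).restrict_preimage (measurableSet_ball (x := (0 : Euc N)) (ε := R))
    have h3 : reflect N e ⁻¹' Metric.ball (0 : Euc N) R = Metric.ball (0 : Euc N) R := by
      ext x; simp [refl_norm he]
    rwa [h3] at h2
  have iPr : IntegrableOn (fun x => P (reflect N e x)) (Metric.ball (0 : Euc N) R) :=
    (hmp.integrable_comp_emb (refl_emb he)).2 iP
  have iP2r : IntegrableOn (fun x => P (reflect N e x) ^ 2) (Metric.ball (0 : Euc N) R) :=
    (hmp.integrable_comp_emb (refl_emb he) (g := fun x => P x ^ 2)).2 iP2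
  have hint : ∫ x in Metric.ball (0 : Euc N) R, P x = 0 := by
    have h1 : ∫ x in Metric.ball (0 : Euc N) R, (P x + P (reflect N e x)) =
        ∫ x in Metric.ball (0 : Euc N) R, (u x + u (reflect N e x)) := by
      congr 1; ext x
      rcases pol_cases u x he with h | h <;> rw [hPd, h.1, h.2]
      ring
    rw [integral_add iP iPr, integral_add iu iur, refl_setInt he R P, refl_setInt he R u, h0] at h1
    linarith
  have hint2 : ∫ x in Metric.ball (0 : Euc N) R, P x ^ 2 =
      ∫ x in Metric.ball (0 : Euc N) R, u x ^ 2 := by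
    have h1 : ∫ x in Metric.ball (0 : Euc N) R, (P x ^ 2 + P (reflect N e x) ^ 2) =
        ∫ x in Metric.ball (0 : Euc N) R, (u x ^ 2 + u (reflect N e x) ^ 2) := by
      congr 1; ext x
      rcases pol_cases u x he with h | h <;> rw [hPd, h.1, h.2]
      ring
    rw [integral_add iP2 iP2r, integral_add iu2 iur2, refl_setInt he R (fun x => P x ^ 2),
      refl_setInt he R (fun x => u x ^ 2)] at h1
    linarith
  have hApos : 0 < ∫ x in Metric.ball (0 : Euc N) R, u x ^ 2 := by
    refine lt_of_le_of_ne (integral_nonneg fun x => sq_nonneg _) fun hz => hne ?_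
    have := (integral_eq_zero_iff_of_nonneg (fun x => sq_nonneg _) iu2).1 hz.symm
    filter_upwards [this] with x hx
    simpa using hx
  have hPfin : semiSq N s (Metric.ball (0 : Euc N) R) P < ⊤ :=
    lt_of_le_of_lt (semi_pol_le he hR hs.1 hm.1) hm.2.2
  have hPmem : memHs N s (Metric.ball (0 : Euc N) R) P := ⟨hPm, (l2_int _ hPm).2 iP2, hPfin⟩
  have hle := mu1_le hs _ hPmem hint (by rw [hint2]; exact hApos)
  have heq := hw u hm
  rw [bform_self s _ hm.1] at heq
  have heq2 : ∫ x in Metric.ball (0 : Euc N) R, u x * u x =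
      ∫ x in Metric.ball (0 : Euc N) R, u x ^ 2 := by congr 1; ext x; ring
  rw [hint2, ← heq2, ← heq] at hle
  have hcp := cNs_pos (N := N) hs
  have := le_of_mul_le_mul_left hle (by positivity)
  exact (ENNReal.toReal_le_toReal hm.2.2.ne hPfin.ne).1 this

/-- If the antisymmetric part vanishes in the ball it vanishes everywhere. -/
lemma anti_zero (he : ‖e‖ = 1) {R : ℝ} (hR : 0 < R) {s : ℝ} (hs : s ∈ Set.Ioo (0 : ℝ) 1)
    {u : Euc N → ℝ} (hc : Continuous u) (hu : IsFirstEigen N s (Metric.ball (0 : Euc N) R) u)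
    (hz : ∀ x : Euc N, ‖x‖ < R → u x = u (reflect N e x)) (y : Euc N) :
    u y = u (reflect N e y) := by
  obtain ⟨hm, hne, h0, hwk⟩ := hu
  have hr := refl_cont he
  let w : Euc N → ℝ := fun x => u x - u (reflect N e x)
  have hwc : Continuous w := by fun_prop
  have hwr : ∀ x, w (reflect N e x) = - w x := by
    intro x; simp only [w]; rw [refl_invol he]; ring
  have hσ := refl_mp he
  have m1 := map_mp hR hσ hσ (refl_norm he) (refl_norm he)
  have emb : MeasurableEmbedding (Prod.map (reflect N e) (reflect N e)) :=
    (refl_emb he).prodMap (refl_emb he)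
  have iu := (semi_int s _ hm.1).1 hm.2.2
  have iur : IntegrableOn (fun q : Euc N × Euc N =>
      (u (reflect N e q.1) - u (reflect N e q.2)) ^ 2 / kern N s q.1 q.2)
      (reg N (Metric.ball (0 : Euc N) R)) := by
    have := (m1.integrable_comp_emb emb).2 iu
    refine Integrable.congr this (ae_of_all _ fun q => ?_)
    simp only [Function.comp, Prod.map, kern_rr he]
  have iw : IntegrableOn (fun q : Euc N × Euc N => (w q.1 - w q.2) ^ 2 / kern N s q.1 q.2)
      (reg N (Metric.ball (0 : Euc N) R)) := by
    refine ((iu.const_mul 2).add (iur.const_mul 2)).mono'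
      (dens_meas s hwc.measurable).aestronglyMeasurable (ae_of_all _ fun q => ?_)
    rw [Real.norm_of_nonneg (dens_nonneg _ _ _ _)]
    show _ ≤ 2 * ((u q.1 - u q.2) ^ 2 / kern N s q.1 q.2) +
      2 * ((u (reflect N e q.1) - u (reflect N e q.2)) ^ 2 / kern N s q.1 q.2)
    rw [← mul_div_assoc, ← mul_div_assoc, ← add_div]
    refine div_le_div_of_nonneg_right ?_ (kern_nonneg _ _ _)
    simp only [w]
    nlinarith [sq_nonneg (u q.1 - u q.2 + (u (reflect N e q.1) - u (reflect N e q.2)))]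
  have hwm : memHs N s (Metric.ball (0 : Euc N) R) w := by
    refine ⟨hwc.measurable, (l2_int _ hwc.measurable).2 (cont_int_ball (by fun_prop) R),
      (semi_int s _ hwc.measurable).2 iw⟩
  have hwB : ∫ x in Metric.ball (0 : Euc N) R, u x * w x = 0 := by
    rw [setIntegral_eq_zero_of_forall_eq_zero]
    intro x hx
    simp only [w]
    rw [hz x (by simpa using hx), sub_self, mul_zero]
  have hb : bform N s (Metric.ball (0 : Euc N) R) u w = 0 := by
    have := hwk w hwm
    rw [hwB, mul_zero] at this
    have hcp := cNs_pos (N := N) hs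
    rcases mul_eq_zero.1 this with h | h
    · linarith
    · exact h
  let f : Euc N × Euc N → ℝ := fun q => (u q.1 - u q.2) * (w q.1 - w q.2) / kern N s q.1 q.2
  have hfm : Measurable f := by
    have := kern_meas (N := N) s
    have := hm.1
    have := hwc.measurable
    fun_prop
  have hfi : IntegrableOn f (reg N (Metric.ball (0 : Euc N) R)) := by
    refine (iu.add iw).mono' hfm.aestronglyMeasurable (ae_of_all _ fun q => ?_)
    show ‖(u q.1 - u q.2) * (w q.1 - w q.2) / kern N s q.1 q.2‖ ≤
      (u q.1 - u q.2) ^ 2 / kern N s q.1 q.2 + (w q.1 - w q.2) ^ 2 / kern N s q.1 q.2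
    rw [← add_div, norm_div, Real.norm_of_nonneg (kern_nonneg s _ _)]
    refine div_le_div_of_nonneg_right ?_ (kern_nonneg _ _ _)
    rw [Real.norm_eq_abs, abs_le]
    constructor <;> nlinarith [sq_nonneg (u q.1 - u q.2 + (w q.1 - w q.2)),
      sq_nonneg (u q.1 - u q.2 - (w q.1 - w q.2)), sq_nonneg (u q.1 - u q.2), sq_nonneg (w q.1 - w q.2)]
  have hfr := m1.integral_comp emb f
  have hfir := (m1.integrable_comp_emb emb).2 hfi
  have hsum : ∫ q in reg N (Metric.ball (0 : Euc N) R),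
      (w q.1 - w q.2) ^ 2 / kern N s q.1 q.2 = 0 := by
    have h1 := integral_add hfi hfir
    have h2 : ∫ q in reg N (Metric.ball (0 : Euc N) R), f q = 0 := hb
    simp only [Function.comp] at h1
    rw [hfr, h2, add_zero] at h1
    rw [← h1]
    congr 1; ext q
    simp only [f, Prod.map, hwr, kern_rr he]
    rw [← add_div]; congr 1
    simp only [w]; ring
  have hae := (integral_eq_zero_iff_of_nonneg (fun q => dens_nonneg s w _ _) iw).1 hsum
  let U : Set (Euc N × Euc N) := {q | ‖q.1‖ < R ∧ w q.1 ≠ w q.2}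
  have hU : IsOpen U := by
    simp only [U, ofPred_and]
    refine IsOpen.inter ?_ ?_
    · apply isOpen_lt <;> fun_prop
    · apply isOpen_ne_fun <;> fun_prop
  have hUe := reg_open hR hU (fun q hq => hq.1) hae (fun q hq h => by
    have hne : q.1 ≠ q.2 := fun h => hq.2 (by rw [h])
    have hk := kern_pos s hne
    have h : (w q.1 - w q.2) ^ 2 / kern N s q.1 q.2 = 0 := h
    rcases div_eq_zero_iff.1 h with h | h
    · exact hq.2 (sub_eq_zero.1 (pow_eq_zero_iff two_ne_zero |>.1 h))
    · exact hk.ne' h)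
  by_contra hy
  have hm : ((0 : Euc N), y) ∈ U := by
    refine ⟨by simpa using hR, ?_⟩
    have : w 0 = 0 := by simp only [w]; rw [← hz 0 (by simpa using hR), sub_self]
    rw [this]
    exact fun h => hy (sub_eq_zero.1 h.symm)
  rw [hUe] at hm; exact hm

lemma dichotomy (he : ‖e‖ = 1) {R : ℝ} (hR : 0 < R) {s : ℝ} (hs : s ∈ Set.Ioo (0 : ℝ) 1)
    {u : Euc N → ℝ} (hc : Continuous u) (hu : IsFirstEigen N s (Metric.ball (0 : Euc N) R) u) :
    (∀ x : Euc N, 0 ≤ (inner ℝ x e : ℝ) → u x ≤ u (reflect N e x)) ∨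
      (∀ x : Euc N, 0 ≤ (inner ℝ x e : ℝ) → u (reflect N e x) ≤ u x) := by
  have hE := eigen_pol he hR hs hc hu
  have key := @pol_eq_case N e he R hR s hs.1 u hc hu.1.2.2 hE
  by_cases h : ∃ x : Euc N, ‖x‖ < R ∧ 0 < (inner ℝ x e : ℝ) ∧ u x ≠ u (reflect N e x)
  · obtain ⟨x, hx, hxe, hne⟩ := h
    rcases lt_or_gt_of_ne hne with hlt | hlt
    · left
      intro y hy
      rcases hy.eq_or_lt with hy | hy
      · rw [refl_of_zero hy.symm]
      by_contra! hcon
      exact key hxe hy (Or.inl hx) hlt hcon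
    · right
      intro y hy
      rcases hy.eq_or_lt with hy | hy
      · rw [refl_of_zero hy.symm]
      by_contra! hcon
      exact key hy hxe (Or.inr hx) hcon hlt
  · push Not at h
    left
    intro y _
    refine (anti_zero he hR hs hc hu ?_ y).le
    intro x hx
    rcases lt_trichotomy 0 (inner ℝ x e : ℝ) with hi | hi | hi
    · exact h x hx hi
    · rw [refl_of_zero hi.symm]
    · have := h (reflect N e x) (by rwa [refl_norm he]) (by rw [refl_inner he]; linarith)
      rw [refl_invol he] at this
      exact this.symm

end Energy

/-- Corollary 4.4: a continuous first nontrivial eigenfunction in a ball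
coincides with each of its polarizations (or with the polarization of its reflection), and is
foliated Schwarz symmetric with respect to some direction `p`. -/
theorem statement15 (N : ℕ) (hN : 2 ≤ N) (s : ℝ) (hs : s ∈ Set.Ioo (0 : ℝ) 1)
    (R : ℝ) (hR : 0 < R) (B : Set (Euc N)) (hB : B = Metric.ball (0 : Euc N) R)
    (u : Euc N → ℝ) (hu : IsFirstEigen N s B u) (hc : Continuous u) :
    (∀ e : Euc N, ‖e‖ = 1 →
      ((∀ x : Euc N, polarize N e u x = u x) ∨
        (∀ x : Euc N, polarize N e u x = u (reflect N e x)))) ∧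
    (∃ p : Euc N, ‖p‖ = 1 ∧ FoliatedSchwarz N p u) := by
  subst hB
  have hd := fun e (he : ‖e‖ = 1) => dichotomy he hR hs hc hu
  refine ⟨fun e he => ?_, fol_main hN hc hd⟩
  rcases hd e he with h | h
  · left
    intro x
    rcases le_or_gt 0 (inner ℝ x e : ℝ) with hx | hx
    · rw [pol_pos hx, min_eq_left (h x hx)]
    · have := h (reflect N e x) (by rw [refl_inner he]; linarith)
      rw [refl_invol he] at this
      unfold polarize
      rw [if_neg (by linarith), max_eq_left this]
  · right
    intro x
    rcases le_or_gt 0 (inner ℝ x e : ℝ) with hx | hx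
    · rw [pol_pos hx, min_eq_right (h x hx)]
    · have := h (reflect N e x) (by rw [refl_inner he]; linarith)
      rw [refl_invol he] at this
      unfold polarize
      rw [if_neg (by linarith), max_eq_right this]

end FracNeumann
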